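/- For a word w = a₁⋯a_n in E_r, define w̄ = Σ_{J ∈ C(n)} J[w], the sum over all compositions J of n of the contracted words J[w]. Then w̄ = Σ_{w₁⋯w_k = R(w)} (−1)^{n−k} w₁ * ⋯ * w_k, where the sum runs over decompositions of the reversed word R(w) into nonempty consecutive subwords. -/

import Mathlib

open Finsupp Finset

/-- A letter `z_{i,j}`: first subscript a natural number (positive in intended use),
second subscript in `ℤ/r`. -/
abbrev QLetter (r : ℕ) := ℕ × ZMod r

/-- The Euler algebra `E_r` as a vector space: formal `ℂ`-linear combinations of words. -/
abbrev EulerAlg (r : ℕ) := List (QLetter r) →₀ ℂ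

/-- `[a,b]`: add first subscripts, add second subscripts mod `r`. -/
def ladd {r : ℕ} (a b : QLetter r) : QLetter r := (a.1 + b.1, a.2 + b.2)

/-- Quasi-shuffle product of two words, inductively. -/
noncomputable def qmulW {r : ℕ} : List (QLetter r) → List (QLetter r) → EulerAlg r
  | [], w => Finsupp.single w 1
  | a :: w, [] => Finsupp.single (a :: w) 1
  | a :: w, b :: v =>
      (qmulW w (b :: v)).mapDomain (a :: ·) +
      (qmulW (a :: w) v).mapDomain (b :: ·) +
      (qmulW w v).mapDomain (ladd a b :: ·)
  termination_by w v => w.length + v.length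

/-- Bilinear extension of the quasi-shuffle product to `E_r`. -/
noncomputable def qmul {r : ℕ} (x y : EulerAlg r) : EulerAlg r :=
  x.sum fun w c => y.sum fun v d => (c * d) • qmulW w v
/-- `J[w]`: contraction of a word along a composition of its length. -/
def contract {r n : ℕ} (J : Composition n) (w : List (QLetter r)) : List (QLetter r) :=
  (w.splitWrtComposition J).map fun b => ((b.map Prod.fst).sum, (b.map Prod.snd).sum)

/-- Quasi-shuffle product of a list of words. -/
noncomputable def qprodW {r : ℕ} : List (List (QLetter r)) → EulerAlg r
  | [] => Finsupp.single [] 1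
  | w :: t => qmul (Finsupp.single w 1) (qprodW t)

/-- Sum over compositions of `n` of a function of the list of blocks. -/
noncomputable def compSum {M : Type*} [AddCommMonoid M] (n : ℕ) (g : List ℕ → M) : M :=
  ∑ J : Composition n, g J.blocks

theorem compSum_zero {M : Type*} [AddCommMonoid M] (g : List ℕ → M) :
    compSum 0 g = g [] := by
  unfold compSum
  have hb : ∀ J : Composition 0, J.blocks = [] := fun J => J.blocks_eq_nil.2 rfl
  have hc : Fintype.card (Composition 0) = 1 := by rw [composition_card]; rfl
  simp only [hb, Finset.sum_const, Finset.card_univ, hc, one_smul]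

theorem compSum_succ {M : Type*} [AddCommMonoid M] (n : ℕ) (g : List ℕ → M) :
    compSum (n + 1) g =
      ∑ i ∈ Finset.range (n + 1), compSum (n - i) (fun l => g ((i + 1) :: l)) := by
  rw [← Fin.sum_univ_eq_sum_range (fun i => compSum (n - i) (fun l => g ((i + 1) :: l)))]
  unfold compSum
  rw [← Fintype.sum_sigma']
  symm
  refine Fintype.sum_bijective
    (fun p : (i : Fin (n + 1)) × Composition (n - (i : ℕ)) =>
      (⟨((p.1 : ℕ) + 1) :: p.2.blocks, by
        intro i hi
        rcases List.mem_cons.1 hi with h | h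
        · omega
        · exact p.2.blocks_pos h, by
        have := p.2.blocks_sum
        have h2 := p.1.2
        rw [List.sum_cons, this]
        omega⟩ : Composition (n + 1))) ⟨?_, ?_⟩ _ _ ?_
  · rintro ⟨i, J⟩ ⟨i', J'⟩ h
    have h1 := congrArg Composition.blocks h
    simp only [List.cons.injEq, add_left_inj] at h1
    obtain ⟨h1, h2⟩ := h1
    obtain rfl := Fin.ext h1
    obtain rfl := Composition.ext h2
    rfl
  · rintro ⟨bl, hp, hs⟩
    cases bl with
    | nil => simp at hs
    | cons b bl =>
      have hb : 0 < b := hp (by simp)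
      rw [List.sum_cons] at hs
      refine ⟨⟨⟨b - 1, by omega⟩, ⟨bl, fun h => hp (List.mem_cons_of_mem _ h), ?_⟩⟩, ?_⟩
      · simp only
        omega
      · apply Composition.ext
        simp only [List.cons.injEq, and_true]
        omega
  · intro p
    rfl

/-- The letter obtained by contracting a block. -/
def blk {r : ℕ} (b : List (QLetter r)) : QLetter r := ((b.map Prod.fst).sum, (b.map Prod.snd).sum)

/-- Prepending a letter, linearly. -/
noncomputable def consL {r : ℕ} (a : QLetter r) : EulerAlg r →ₗ[ℂ] EulerAlg r :=
  Finsupp.lmapDomain ℂ ℂ (a :: ·)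

/-- Left multiplication by a word, linearly. -/
noncomputable def mulL {r : ℕ} (s : List (QLetter r)) : EulerAlg r →ₗ[ℂ] EulerAlg r :=
  Finsupp.linearCombination ℂ (qmulW s)

theorem qmul_single {r : ℕ} (s : List (QLetter r)) (y : EulerAlg r) :
    qmul (Finsupp.single s 1) y = mulL s y := by
  unfold qmul mulL
  rw [Finsupp.sum_single_index]
  · simp [Finsupp.linearCombination_apply]
  · simp

theorem mulL_nil {r : ℕ} (y : EulerAlg r) : mulL [] y = y := by
  have : (mulL [] : EulerAlg r →ₗ[ℂ] EulerAlg r) = LinearMap.id := by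
    ext v : 2
    simp [mulL, qmulW]
  rw [this]; rfl

theorem mulL_one {r : ℕ} (s : List (QLetter r)) :
    mulL s (Finsupp.single [] 1) = Finsupp.single s 1 := by
  cases s <;> simp [mulL, qmulW]

theorem mulL_cons {r : ℕ} (a b : QLetter r) (s : List (QLetter r)) (y : EulerAlg r) :
    mulL (a :: s) (consL b y) =
      consL a (mulL s (consL b y)) + consL b (mulL (a :: s) y) + consL (ladd a b) (mulL s y) := by
  have : (mulL (a :: s)).comp (consL b) =
      (consL a).comp ((mulL s).comp (consL b)) + (consL b).comp (mulL (a :: s))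
        + (consL (ladd a b)).comp (mulL s) := by
    ext v : 2
    simp [mulL, consL, qmulW, Finsupp.mapDomain_single]
  exact LinearMap.congr_fun this y

/-- `w̄`. -/
noncomputable def barW {r : ℕ} (w : List (QLetter r)) : EulerAlg r :=
  compSum w.length fun l => Finsupp.single ((w.splitWrtCompositionAux l).map blk) (1 : ℂ)

/-- The alternating sum of products. -/
noncomputable def altP {r : ℕ} (u : List (QLetter r)) : EulerAlg r :=
  compSum u.length fun l => (-1 : ℂ) ^ (u.length - l.length) • qprodW (u.splitWrtCompositionAux l)

theorem barW_nil {r : ℕ} : barW ([] : List (QLetter r)) = Finsupp.single [] 1 := by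
  unfold barW
  rw [List.length_nil, compSum_zero]
  rfl

theorem altP_nil {r : ℕ} : altP ([] : List (QLetter r)) = Finsupp.single [] 1 := by
  unfold altP
  rw [List.length_nil, compSum_zero]
  simp [List.splitWrtCompositionAux, qprodW]

theorem map_compSum {M N : Type*} [AddCommMonoid M] [AddCommMonoid N] [Module ℂ M] [Module ℂ N]
    (f : M →ₗ[ℂ] N) (n : ℕ) (g : List ℕ → M) :
    f (compSum n g) = compSum n fun l => f (g l) := by
  unfold compSum
  rw [map_sum]

theorem barW_rec {r : ℕ} (w : List (QLetter r)) (hw : w ≠ []) :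
    barW w = ∑ i ∈ Finset.range w.length,
      consL (blk (w.take (i + 1))) (barW (w.drop (i + 1))) := by
  obtain ⟨n, hn⟩ : ∃ n, w.length = n + 1 :=
    Nat.exists_eq_succ_of_ne_zero (by simpa using hw)
  conv_lhs => unfold barW
  rw [hn, compSum_succ]
  refine Finset.sum_congr rfl fun i _ => ?_
  unfold barW
  rw [map_compSum, List.length_drop, hn, Nat.add_sub_add_right]
  congr 1
  funext l
  simp [List.splitWrtCompositionAux_cons, consL, Finsupp.mapDomain_single]

theorem altP_rec {r : ℕ} (w : List (QLetter r)) (hw : w ≠ []) :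
    altP w = ∑ i ∈ Finset.range w.length,
      (-1 : ℂ) ^ i • mulL (w.take (i + 1)) (altP (w.drop (i + 1))) := by
  obtain ⟨n, hn⟩ : ∃ n, w.length = n + 1 :=
    Nat.exists_eq_succ_of_ne_zero (by simpa using hw)
  conv_lhs => unfold altP
  rw [hn, compSum_succ]
  refine Finset.sum_congr rfl fun i hi => ?_
  rw [Finset.mem_range] at hi
  unfold altP
  rw [map_compSum, List.length_drop, hn, Nat.add_sub_add_right]
  unfold compSum
  rw [Finset.smul_sum]
  refine Finset.sum_congr rfl fun J _ => ?_
  have hJ := J.length_le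
  unfold Composition.length at hJ
  beta_reduce
  rw [map_smul, smul_smul, ← pow_add, List.splitWrtCompositionAux_cons, qprodW, qmul_single]
  congr 2
  rw [List.length_cons]
  omega

/-- The convolution sum which vanishes on nonempty words. -/
noncomputable def conv {r : ℕ} (w : List (QLetter r)) : EulerAlg r :=
  ∑ j ∈ Finset.range (w.length + 1),
    (-1 : ℂ) ^ (w.length - j) • mulL (w.drop j).reverse (barW (w.take j))

theorem conv_nil {r : ℕ} : conv ([] : List (QLetter r)) = Finsupp.single [] 1 := by
  simp [conv, mulL_nil, barW_nil]

theorem mulL_cons_barW {r : ℕ} (c : QLetter r) (s v : List (QLetter r)) :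
    mulL (c :: s) (barW v) = consL c (mulL s (barW v)) +
      ∑ i ∈ Finset.range v.length,
        consL (blk (v.take (i + 1))) (mulL (c :: s) (barW (v.drop (i + 1)))) +
      ∑ i ∈ Finset.range v.length,
        consL (ladd c (blk (v.take (i + 1)))) (mulL s (barW (v.drop (i + 1)))) := by
  by_cases hv : v = []
  · subst hv
    simp [barW_nil, mulL_one, consL, Finsupp.mapDomain_single]
  · rw [barW_rec v hv]
    simp only [map_sum, mulL_cons, Finset.sum_add_distrib]

theorem double_sum {r : ℕ} (φ : QLetter r → QLetter r) (w : List (QLetter r)) :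
    ∑ j ∈ Finset.range (w.length + 1), (-1 : ℂ) ^ (w.length - j) •
      ∑ i ∈ Finset.range j, consL (φ (blk (w.take (i + 1))))
        (mulL (w.drop j).reverse (barW ((w.take j).drop (i + 1)))) =
    ∑ i ∈ Finset.range w.length, consL (φ (blk (w.take (i + 1)))) (conv (w.drop (i + 1))) := by
  simp only [conv, map_sum, Finset.smul_sum, Finset.sum_sigma', map_smul]
  refine Finset.sum_nbij' (fun p => ⟨p.2, p.1 - (p.2 + 1)⟩) (fun p => ⟨p.2 + (p.1 + 1), p.1⟩)
    ?_ ?_ ?_ ?_ ?_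
  · rintro ⟨j, i⟩ h
    simp only [Finset.mem_sigma, Finset.mem_range, List.length_drop] at h ⊢
    omega
  · rintro ⟨j, i⟩ h
    simp only [Finset.mem_sigma, Finset.mem_range, List.length_drop] at h ⊢
    omega
  · rintro ⟨j, i⟩ h
    simp only [Finset.mem_sigma, Finset.mem_range] at h
    simp only [Sigma.mk.injEq, heq_eq_eq, and_true]
    omega
  · rintro ⟨j, i⟩ h
    simp
  · rintro ⟨j, i⟩ h
    simp only [Finset.mem_sigma, Finset.mem_range] at h
    have e : i + 1 + (j - (i + 1)) = j := by omega
    simp only [List.length_drop, List.drop_take, List.drop_drop, e]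
    congr 2
    omega

theorem blk_append {r : ℕ} (x : List (QLetter r)) (c : QLetter r) :
    blk (x ++ [c]) = ladd c (blk x) := by
  simp [blk, ladd, add_comm]

theorem conv_concat {r : ℕ} (w : List (QLetter r)) (c : QLetter r) :
    conv (w ++ [c]) = - consL c (conv w) +
      ∑ i ∈ Finset.range (w ++ [c]).length,
        consL (blk ((w ++ [c]).take (i + 1))) (conv ((w ++ [c]).drop (i + 1))) -
      ∑ i ∈ Finset.range w.length,
        consL (ladd c (blk (w.take (i + 1)))) (conv (w.drop (i + 1))) := by
  rw [← double_sum (fun x => x) (w ++ [c]), ← double_sum (fun x => ladd c x) w]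
  have hl : (w ++ [c]).length = w.length + 1 := by simp
  rw [hl, Finset.sum_range_succ _ (w.length + 1)]
  conv_lhs => rw [conv, hl, Finset.sum_range_succ]
  have h1 : (w ++ [c]).take (w.length + 1) = w ++ [c] := List.take_of_length_le (by simp)
  have h2 : (w ++ [c]).drop (w.length + 1) = [] := List.drop_of_length_le (by simp)
  rw [h1, h2, List.reverse_nil, mulL_nil, Nat.sub_self, pow_zero, one_smul, one_smul,
    barW_rec (w ++ [c]) (by simp), hl]
  simp only [mulL_nil]
  rw [← add_assoc, add_sub_right_comm]
  congr 1
  rw [conv, map_sum, ← Finset.sum_neg_distrib, ← Finset.sum_add_distrib,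
    ← Finset.sum_sub_distrib]
  refine Finset.sum_congr rfl fun j hj => ?_
  have hj' : j ≤ w.length := by
    rw [Finset.mem_range] at hj
    omega
  have e1 : ((w ++ [c]).drop j).reverse = c :: (w.drop j).reverse := by
    rw [List.drop_append_of_le_length hj']
    simp
  have e2 : (w ++ [c]).take j = w.take j := List.take_append_of_le_length hj'
  have e3 : w.length + 1 - j = (w.length - j) + 1 := by omega
  have e4 : (w.take j).length = j := by simp [hj']
  have e5 : ∀ i ∈ Finset.range j, (w ++ [c]).take (i + 1) = (w.take j).take (i + 1) := by
    intro i hi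
    rw [Finset.mem_range] at hi
    rw [List.take_take, List.take_append_of_le_length (by omega), min_eq_left (by omega)]
  have e6 : ∀ i ∈ Finset.range j, w.take (i + 1) = (w.take j).take (i + 1) := by
    intro i hi
    rw [Finset.mem_range] at hi
    rw [List.take_take, min_eq_left (by omega)]
  rw [e1, e2, mulL_cons_barW, e4, e3, pow_succ]
  have E5 : ∑ i ∈ Finset.range j, consL (blk ((w ++ [c]).take (i + 1)))
        (mulL (c :: (w.drop j).reverse) (barW ((w.take j).drop (i + 1)))) =
      ∑ i ∈ Finset.range j, consL (blk ((w.take j).take (i + 1)))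
        (mulL (c :: (w.drop j).reverse) (barW ((w.take j).drop (i + 1)))) :=
    Finset.sum_congr rfl fun i hi => by rw [e5 i hi]
  have E6 : ∑ i ∈ Finset.range j, consL (ladd c (blk (w.take (i + 1))))
        (mulL (w.drop j).reverse (barW ((w.take j).drop (i + 1)))) =
      ∑ i ∈ Finset.range j, consL (ladd c (blk ((w.take j).take (i + 1))))
        (mulL (w.drop j).reverse (barW ((w.take j).drop (i + 1)))) :=
    Finset.sum_congr rfl fun i hi => by rw [e6 i hi]
  rw [E5, E6]
  rw [map_smul]
  module

theorem conv_eq_zero {r : ℕ} : ∀ (n : ℕ) (w : List (QLetter r)), w.length = n → w ≠ [] →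
    conv w = 0 := by
  intro n
  induction n using Nat.strong_induction_on with
  | _ n ih =>
    intro w hn hw
    obtain ⟨v, c, rfl⟩ : ∃ v c, w = v ++ [c] :=
      ⟨w.dropLast, w.getLast hw, (List.dropLast_append_getLast hw).symm⟩
    have hl : (v ++ [c]).length = v.length + 1 := by simp
    rw [conv_concat, hl, Finset.sum_range_succ]
    have z1 : ∑ i ∈ Finset.range v.length,
        consL (blk ((v ++ [c]).take (i + 1))) (conv ((v ++ [c]).drop (i + 1))) = 0 := by
      refine Finset.sum_eq_zero fun i hi => ?_
      rw [Finset.mem_range] at hi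
      rw [ih _ _ _ rfl, map_zero]
      · intro h
        have := congrArg List.length h
        rw [List.length_drop, List.length_nil] at this
        omega
      · rw [← hn, List.length_drop, hl]
        omega
    have h1 : (v ++ [c]).take (v.length + 1) = v ++ [c] := List.take_of_length_le (by simp)
    have h2 : (v ++ [c]).drop (v.length + 1) = [] := List.drop_of_length_le (by simp)
    rw [z1, h1, h2, zero_add, blk_append]
    rcases Nat.eq_zero_or_pos v.length with hv | hv
    · have hv' : v = [] := by simpa using hv
      subst hv'
      simp [blk, ladd]
    · obtain ⟨m, hm⟩ : ∃ m, v.length = m + 1 := Nat.exists_eq_succ_of_ne_zero (by omega)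
      have hv' : v ≠ [] := by
        rintro rfl
        simp at hv
      have z2 : ∑ i ∈ Finset.range m,
          consL (ladd c (blk (v.take (i + 1)))) (conv (v.drop (i + 1))) = 0 := by
        refine Finset.sum_eq_zero fun i hi => ?_
        rw [Finset.mem_range] at hi
        rw [ih _ _ _ rfl, map_zero]
        · intro h
          have := congrArg List.length h
          rw [List.length_drop, List.length_nil] at this
          omega
        · rw [← hn, List.length_drop, hl]
          omega
      rw [ih v.length (by omega) v rfl hv', hm, Finset.sum_range_succ, z2, ← hm,
        List.take_length, List.drop_length]
      simp

theorem barW_eq_altP {r : ℕ} : ∀ (n : ℕ) (u : List (QLetter r)), u.length = n →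
    barW u.reverse = altP u := by
  intro n
  induction n using Nat.strong_induction_on with
  | _ n ih =>
    intro u hn
    by_cases hu : u = []
    · subst hu
      rw [List.reverse_nil, barW_nil, altP_nil]
    · have h0 := conv_eq_zero _ u.reverse rfl (by simpa using hu)
      have hpos : 0 < u.length := List.length_pos_iff.2 hu
      rw [conv, ← Finset.sum_range_reflect, Finset.sum_range_succ', List.length_reverse] at h0
      have hlast : u.reverse.take u.length = u.reverse := List.take_of_length_le (by simp)
      have hlast2 : u.reverse.drop u.length = [] := List.drop_of_length_le (by simp)
      simp only [Nat.add_sub_cancel, Nat.sub_zero, hlast, hlast2, List.reverse_nil, mulL_nil,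
        Nat.sub_self, pow_zero, one_smul] at h0
      rw [altP_rec u hu, eq_neg_of_add_eq_zero_right h0, ← Finset.sum_neg_distrib]
      refine Finset.sum_congr rfl fun i hi => ?_
      rw [Finset.mem_range] at hi
      rw [← ih _ _ (u.drop (i + 1)) rfl]
      · have e1 : u.length - (u.length - (i + 1)) = i + 1 := by omega
        rw [e1, List.drop_reverse, List.reverse_reverse, e1, List.reverse_drop, pow_succ]
        module
      · rw [List.length_drop]
        omega

/-- `w̄ = ∑_{J ∈ C(n)} J[w]` equals the alternating sum, over decompositions of the
reversed word into nonempty consecutive subwords, of the `*`-products of the pieces. -/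
theorem barw_eq_products (r : ℕ) (hr : 0 < r) (w : List (QLetter r))
    (hpos : ∀ a ∈ w, 0 < a.1) :
    (∑ J : Composition w.length, Finsupp.single (contract J w) (1 : ℂ)) =
      ∑ J : Composition w.length,
        (-1 : ℂ) ^ (w.length - J.length) • qprodW (w.reverse.splitWrtComposition J) := by
  have h := barW_eq_altP _ w.reverse rfl
  rw [List.reverse_reverse] at h
  unfold barW altP at h
  rw [List.length_reverse] at h
  exact h
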